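/- Let (L₁, L₂) and (L₁', L₂') be two pairs of 5-dimensional totally isotropic subspaces of V such that dim(L₁ ∩ L₂) = dim(L₁' ∩ L₂'). Then there exists an orthogonal transformation of V, i.e. a linear equivalence f : V ≃ V with B(f(x), f(y)) = B(x, y) for all x, y ∈ V, such that f maps L₁ onto L₁' and L₂ onto L₂'. -/

import Mathlib

/-!
Both pairs are brought to the same normal form. For maximal isotropic `L₁`, `L₂` with
`dim (L₁ ∩ L₂) = k`, there is a hyperbolic basis `e_i, f_i` of `V` (`B e_i e_j = B f_i f_j = 0`,
`B e_i f_j = δ_ij`), indexed by `i ∈ Fin k ⊕ Fin r`, such that `L₁` is spanned by the `e_i` and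
`L₂` by the `e_i` of the first block together with the `f_i` of the second. The linear map
matching the hyperbolic bases of two such pairs is the required isometry.

To find the basis (`exists_hyperbolic_family`), take a basis `e` of `L₁` adapted to
`L₁ = (L₁ ∩ L₂) ⊕ P`. No nonzero vector of `P` is orthogonal to `L₂`, because `L₂ = L₂ᗮ`; hence
`P` and `L₂` pair well enough to find `c_j ∈ L₂` dual to the `e_j` in `P`. For `j` in the first
block take any dual vectors `c_j ∈ V`. The corrected vectors `f_i = c_i - ½ ∑ j, B(c_i, c_j) e_j`
are still dual to `e` and are mutually orthogonal; for `i` in the second block the correction only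
involves `L₁ ∩ L₂`, so `f_i` stays in `L₂`.
-/

noncomputable section

open Module

theorem exists_dual_family {W ι : Type*} [AddCommGroup W] [Module ℂ W]
    [Fintype ι] [DecidableEq ι] (φ : ι → W →ₗ[ℂ] ℂ) (hφ : LinearIndependent ℂ φ) :
    ∃ c : ι → W, ∀ i j, φ i (c j) = if i = j then 1 else 0 := by
  have hinj : Function.Injective (Fintype.linearCombination ℂ φ) :=
    hφ.fintypeLinearCombination_injective
  have hsurj := LinearMap.flip_surjective_iff₁.mpr hinj
  choose c hc using fun j : ι => hsurj (LinearMap.proj j)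
  refine ⟨c, fun i j => ?_⟩
  have h := LinearMap.congr_fun (hc j) (Pi.single i 1)
  simpa [Fintype.linearCombination_apply_single, Pi.single_apply, eq_comm] using h

section

variable {V : Type*} [AddCommGroup V] [Module ℂ V]

/-- A half-dimensional totally isotropic subspace contains its own orthogonal complement. -/
theorem mem_of_orthogonal_isotropic [FiniteDimensional ℂ V] (B : V →ₗ[ℂ] V →ₗ[ℂ] ℂ)
    (hdim : finrank ℂ V = 10) (hsymm : ∀ x y, B x y = B y x)
    (hnd : ∀ x, (∀ y, B x y = 0) → x = 0) (L : Submodule ℂ V) (hd : finrank ℂ L = 5)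
    (hi : ∀ u ∈ L, ∀ u' ∈ L, B u u' = 0) (x : V) (hx : ∀ y ∈ L, B x y = 0) : x ∈ L := by
  have hB : LinearMap.Nondegenerate B :=
    ⟨hnd, fun y h => hnd y fun x => (hsymm y x).trans (h x)⟩
  have hfr := LinearMap.BilinForm.finrank_orthogonal hB L
  have hle : L ≤ LinearMap.BilinForm.orthogonal B L := fun u hu v hv => hi v hv u hu
  have heq := Submodule.eq_of_le_of_finrank_eq hle (by omega)
  rw [heq]
  intro y hy
  exact (hsymm y x).trans (hx y hy)

/-- Subtracting half of the Gram matrix from a family dual to an isotropic family makes it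
isotropic. -/
theorem corrected_isotropic {ι : Type*} [Fintype ι] [DecidableEq ι]
    (B : V →ₗ[ℂ] V →ₗ[ℂ] ℂ) (hsymm : ∀ x y, B x y = B y x) (e g : ι → V)
    (hee : ∀ i j, B (e i) (e j) = 0) (heg : ∀ i j, B (e i) (g j) = if i = j then 1 else 0)
    (i j : ι) :
    B (g i - ∑ l, ((1 / 2 : ℂ) * B (g i) (g l)) • e l)
      (g j - ∑ l, ((1 / 2 : ℂ) * B (g j) (g l)) • e l) = 0 := by
  have hge : ∀ i j, B (g i) (e j) = if j = i then 1 else 0 := fun i j => by rw [hsymm, heg]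
  have h := hsymm (g i) (g j)
  simp [heg, hge, hee]
  rw [h]
  ring

/-- Normal form of a pair of maximal isotropic subspaces: a hyperbolic family `e, f` adapted to
both, the index set being split according to `L₁ ⊓ L₂` and a complement of it in `L₁`. -/
theorem exists_hyperbolic_family [FiniteDimensional ℂ V] (B : V →ₗ[ℂ] V →ₗ[ℂ] ℂ)
    (hdim : finrank ℂ V = 10) (hsymm : ∀ x y, B x y = B y x)
    (hnd : ∀ x, (∀ y, B x y = 0) → x = 0) (L₁ L₂ : Submodule ℂ V)
    (hd₁ : finrank ℂ L₁ = 5) (hi₁ : ∀ u ∈ L₁, ∀ u' ∈ L₁, B u u' = 0)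
    (hd₂ : finrank ℂ L₂ = 5) (hi₂ : ∀ u ∈ L₂, ∀ u' ∈ L₂, B u u' = 0)
    (k r : ℕ) (hk : finrank ℂ ↥(L₁ ⊓ L₂) = k) (hkr : k + r = 5) :
    ∃ e f : Fin k ⊕ Fin r → V,
      (∀ i j, B (e i) (e j) = 0) ∧ (∀ i j, B (f i) (f j) = 0) ∧
      (∀ i j, B (e i) (f j) = if i = j then 1 else 0) ∧
      (∀ i, e i ∈ L₁) ∧ (∀ i, e (Sum.inl i) ∈ L₂) ∧ (∀ i, f (Sum.inr i) ∈ L₂) := by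
  obtain ⟨P, hP⟩ := Submodule.exists_isCompl (L₂.comap L₁.subtype)
  have hK : finrank ℂ (L₂.comap L₁.subtype) = k := by
    rw [← hk, ← Submodule.map_comap_subtype]
    exact (Submodule.finrank_map_subtype_eq _ _).symm
  have hPr : finrank ℂ P = r := by
    have := Submodule.finrank_add_eq_of_isCompl hP
    omega
  let bK := finBasisOfFinrankEq ℂ _ hK
  let bP := finBasisOfFinrankEq ℂ _ hPr
  let b : Basis (Fin k ⊕ Fin r) ℂ L₁ :=
    (bK.prod bP).map (Submodule.prodEquivOfIsCompl _ _ hP)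
  have hbl : ∀ i, b (Sum.inl i) = (bK i : L₁) := fun i => by simp [b]
  have hbr : ∀ i, b (Sum.inr i) = (bP i : L₁) := fun i => by simp [b]
  let e : Fin k ⊕ Fin r → V := fun i => (b i : V)
  have he₁ : ∀ i, e i ∈ L₁ := fun i => (b i).2
  have he₂ : ∀ i, e (Sum.inl i) ∈ L₂ := fun i => by
    have : b (Sum.inl i) ∈ L₂.comap L₁.subtype := by rw [hbl]; exact (bK i).2
    exact this
  have heli : LinearIndependent ℂ e :=
    b.linearIndependent.map' L₁.subtype (Submodule.ker_subtype _)
  have hee : ∀ i j, B (e i) (e j) = 0 := fun i j => hi₁ _ (he₁ i) _ (he₁ j)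
  -- Dual vectors in `V` for all of `e`.
  obtain ⟨c, hc⟩ := exists_dual_family (fun i => B (e i))
    (heli.map' B (LinearMap.ker_eq_bot'.mpr fun x hx => hnd x fun y => by simp [hx]))
  -- Dual vectors inside `L₂` for the second block.
  obtain ⟨d, hdd⟩ := exists_dual_family
    (fun i : Fin r => (B (e (Sum.inr i))).comp L₂.subtype) (by
      rw [Fintype.linearIndependent_iff]
      intro a ha
      have hp : (∑ i, a i • bP i : P) = 0 := by
        have hV : ((∑ i, a i • bP i : P) : L₁) = ∑ i, a i • b (Sum.inr i) := by
          simp [hbr]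
        have hmem : ((∑ i, a i • bP i : P) : L₁) ∈ L₂.comap L₁.subtype := by
          rw [Submodule.mem_comap, hV]
          refine mem_of_orthogonal_isotropic B hdim hsymm hnd L₂ hd₂ hi₂ _ fun y hy => ?_
          have := LinearMap.congr_fun ha ⟨y, hy⟩
          simpa [e] using this
        have := (Submodule.disjoint_def.mp hP.disjoint) _ hmem (Subtype.property _)
        exact Subtype.ext this
      exact Fintype.linearIndependent_iff.mp bP.linearIndependent a hp)
  let g : Fin k ⊕ Fin r → V := Sum.elim (fun i => c (Sum.inl i)) (fun i => (d i : V))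
  have hg₂ : ∀ i, g (Sum.inr i) ∈ L₂ := fun i => (d i).2
  have hg : ∀ i j, B (e i) (g j) = if i = j then 1 else 0 := by
    rintro i (j | j)
    · exact hc i _
    · rcases i with i | i
      · simpa using hi₂ _ (he₂ i) _ (hg₂ j)
      · simpa [g] using hdd i j
  let f : Fin k ⊕ Fin r → V := fun i => g i - ∑ j, ((1 / 2 : ℂ) * B (g i) (g j)) • e j
  refine ⟨e, f, hee, ?_, ?_, he₁, he₂, ?_⟩
  · intro i j
    exact corrected_isotropic B hsymm e g hee hg i j
  · intro i j
    simp [f, hg, hee]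
  · intro i
    refine Submodule.sub_mem _ (hg₂ i) (Submodule.sum_mem _ ?_)
    rintro (j | j) -
    · exact Submodule.smul_mem _ _ (he₂ j)
    · simp [hi₂ _ (hg₂ i) _ (hg₂ j)]

theorem linearIndependent_hyperbolic {ι : Type*} [Fintype ι] [DecidableEq ι]
    (B : V →ₗ[ℂ] V →ₗ[ℂ] ℂ) (hsymm : ∀ x y, B x y = B y x) (e f : ι → V)
    (hee : ∀ i j, B (e i) (e j) = 0) (hff : ∀ i j, B (f i) (f j) = 0)
    (hef : ∀ i j, B (e i) (f j) = if i = j then 1 else 0) :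
    LinearIndependent ℂ (Sum.elim e f) := by
  have hfe : ∀ i j, B (f i) (e j) = if j = i then 1 else 0 := fun i j => by rw [hsymm, hef]
  rw [Fintype.linearIndependent_iff]
  intro a ha
  rw [Fintype.sum_sum_type] at ha
  rintro (i | i)
  · simpa [hff, hfe, hef] using congrArg (B (f i)) ha
  · simpa [hee, hfe, hef] using congrArg (B (e i)) ha

theorem eq_span_of_linearIndependent [FiniteDimensional ℂ V] {ι : Type*} [Fintype ι]
    (L : Submodule ℂ V) (v : ι → V) (hv : LinearIndependent ℂ v) (hmem : ∀ i, v i ∈ L)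
    (hcard : finrank ℂ L = Fintype.card ι) : L = Submodule.span ℂ (Set.range v) := by
  refine (Submodule.eq_of_le_of_finrank_eq ?_ ?_).symm
  · rw [Submodule.span_le]
    rintro _ ⟨i, rfl⟩
    exact hmem i
  · rw [finrank_span_eq_card hv, hcard]

end

/-- the orthogonal group of a 10-dimensional complex quadratic space acts
transitively on pairs of 5-dimensional totally isotropic subspaces with fixed
intersection dimension. -/
theorem orthogonal_transitive_on_isotropic_pairs
    (V : Type*) [AddCommGroup V] [Module ℂ V] [FiniteDimensional ℂ V]
    (hdim : Module.finrank ℂ V = 10)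
    (B : V →ₗ[ℂ] V →ₗ[ℂ] ℂ)
    (hsymm : ∀ x y, B x y = B y x)
    (hnd : ∀ x, (∀ y, B x y = 0) → x = 0)
    (L₁ L₂ L₁' L₂' : Submodule ℂ V)
    (hd₁ : Module.finrank ℂ ↥L₁ = 5) (hi₁ : ∀ u ∈ L₁, ∀ u' ∈ L₁, B u u' = 0)
    (hd₂ : Module.finrank ℂ ↥L₂ = 5) (hi₂ : ∀ u ∈ L₂, ∀ u' ∈ L₂, B u u' = 0)
    (hd₁' : Module.finrank ℂ ↥L₁' = 5) (hi₁' : ∀ u ∈ L₁', ∀ u' ∈ L₁', B u u' = 0)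
    (hd₂' : Module.finrank ℂ ↥L₂' = 5) (hi₂' : ∀ u ∈ L₂', ∀ u' ∈ L₂', B u u' = 0)
    (hint : Module.finrank ℂ ↥(L₁ ⊓ L₂) = Module.finrank ℂ ↥(L₁' ⊓ L₂')) :
    ∃ f : V ≃ₗ[ℂ] V, (∀ x y, B (f x) (f y) = B x y) ∧
      Submodule.map (f : V →ₗ[ℂ] V) L₁ = L₁' ∧
      Submodule.map (f : V →ₗ[ℂ] V) L₂ = L₂' := by
  obtain ⟨k, hk⟩ : ∃ k, finrank ℂ ↥(L₁ ⊓ L₂) = k := ⟨_, rfl⟩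
  obtain ⟨r, hkr⟩ : ∃ r, k + r = 5 := by
    have : finrank ℂ ↥(L₁ ⊓ L₂) ≤ finrank ℂ L₁ := Submodule.finrank_mono inf_le_left
    exact ⟨5 - k, by omega⟩
  obtain ⟨e, f, hee, hff, hef, he₁, he₂, hf₂⟩ :=
    exists_hyperbolic_family B hdim hsymm hnd L₁ L₂ hd₁ hi₁ hd₂ hi₂ k r hk hkr
  obtain ⟨e', f', hee', hff', hef', he₁', he₂', hf₂'⟩ :=
    exists_hyperbolic_family B hdim hsymm hnd L₁' L₂' hd₁' hi₁' hd₂' hi₂' k r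
      (hint.symm.trans hk) hkr
  have hli := linearIndependent_hyperbolic B hsymm e f hee hff hef
  have hli' := linearIndependent_hyperbolic B hsymm e' f' hee' hff' hef'
  have hcard : Fintype.card ((Fin k ⊕ Fin r) ⊕ (Fin k ⊕ Fin r)) = finrank ℂ V := by
    simp only [Fintype.card_sum, Fintype.card_fin]
    omega
  have hcard₅ : 5 = Fintype.card (Fin k ⊕ Fin r) := by simp [hkr]
  have : Nonempty ((Fin k ⊕ Fin r) ⊕ (Fin k ⊕ Fin r)) :=
    Fintype.card_pos_iff.mp (by omega)
  let b := basisOfLinearIndependentOfCardEqFinrank hli hcard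
  let b' := basisOfLinearIndependentOfCardEqFinrank hli' hcard
  have hb : ⇑b = Sum.elim e f := coe_basisOfLinearIndependentOfCardEqFinrank _ _
  have hb' : ⇑b' = Sum.elim e' f' := coe_basisOfLinearIndependentOfCardEqFinrank _ _
  let F : V ≃ₗ[ℂ] V := b.equiv b' (Equiv.refl _)
  have hF : ∀ i, F (Sum.elim e f i) = Sum.elim e' f' i := fun i => by
    rw [← hb, ← hb']
    simp [F]
  have hFe : ∀ i, F (e i) = e' i := fun i => hF (Sum.inl i)
  have hFf : ∀ i, F (f i) = f' i := fun i => hF (Sum.inr i)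
  -- Positions in the hyperbolic basis of the vectors spanning `L₂`: `e` on the first block,
  -- `f` on the second.
  let s : Fin k ⊕ Fin r → (Fin k ⊕ Fin r) ⊕ (Fin k ⊕ Fin r) :=
    Sum.elim (fun i => Sum.inl (Sum.inl i)) (fun i => Sum.inr (Sum.inr i))
  have hs : Function.Injective s := by
    rintro (i | i) (j | j) h <;> simp [s] at h ⊢ <;> exact h
  have hmap : ∀ (t : Fin k ⊕ Fin r → (Fin k ⊕ Fin r) ⊕ (Fin k ⊕ Fin r))
      (_ : Function.Injective t) (L L' : Submodule ℂ V)
      (_ : finrank ℂ L = 5) (_ : finrank ℂ L' = 5)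
      (_ : ∀ i, Sum.elim e f (t i) ∈ L) (_ : ∀ i, Sum.elim e' f' (t i) ∈ L'),
      Submodule.map (F : V →ₗ[ℂ] V) L = L' := by
    intro t ht L L' hL hL' hm hm'
    rw [eq_span_of_linearIndependent L _ (hli.comp t ht) hm (hL.trans hcard₅),
      eq_span_of_linearIndependent L' _ (hli'.comp t ht) hm' (hL'.trans hcard₅),
      Submodule.map_span, ← Set.range_comp]
    congr 2
    funext i
    exact hF (t i)
  refine ⟨F, ?_, hmap Sum.inl Sum.inl_injective L₁ L₁' hd₁ hd₁' he₁ he₁',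
    hmap s hs L₂ L₂' hd₂ hd₂' ?_ ?_⟩
  · have hBF : B.compl₁₂ (F : V →ₗ[ℂ] V) (F : V →ₗ[ℂ] V) = B := by
      refine LinearMap.ext_basis b b fun i j => ?_
      rw [hb]
      rcases i with i | i <;> rcases j with j | j
      · simp [hFe, hee, hee']
      · simp [hFe, hFf, hef, hef']
      · simp [hFe, hFf, hsymm (f i), hsymm (f' i), hef, hef']
      · simp [hFf, hff, hff']
    intro x y
    exact LinearMap.congr_fun₂ hBF x y
  · rintro (i | i)
    · exact he₂ i
    · exact hf₂ i
  · rintro (i | i)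
    · exact he₂' i
    · exact hf₂' i

end
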